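/- Let n ≥ 3 be odd and let f : ℝⁿ → ℝ be a smooth function whose support is a compact subset of the open unit ball B = {x ∈ ℝⁿ : |x| < 1}. For θ ∈ S^{n-1} let φ_θ(t) = (Mf)(θ,t) and g_θ(t) = D^{n-3}[t ↦ t^{n-2} φ_θ(t)](t). Then for every x ∈ B, (1/σ_{n-1}) ∫_{S^{n-1}} g_θ(|x−θ|) dθ = c · (I²f)(x), where c = 2(−1)^{(n−3)/2} Γ(n/2)² / π and I² is the Riesz potential of order 2. -/

import Mathlib

open MeasureTheory Metric

/-- The surface measure on the unit sphere `S^{n-1}` in `ℝⁿ`. -/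
noncomputable def sphereMeasure (n : ℕ) : Measure (sphere (0 : EuclideanSpace ℝ (Fin n)) 1) :=
  (volume : Measure (EuclideanSpace ℝ (Fin n))).toSphere

/-- The operator `D = (1/(2t)) d/dt`. -/
noncomputable def Dop (g : ℝ → ℝ) : ℝ → ℝ := fun t => (1 / (2 * t)) * deriv g t

section helperA
open Set
section polar
variable {n : ℕ} [NeZero n]

lemma polar_aux (F : EuclideanSpace ℝ (Fin n) → ℝ) (hF : Integrable F) :
    (∫ x, F x = ∫ z : sphere (0 : EuclideanSpace ℝ (Fin n)) 1 × Ioi (0:ℝ), F ((z.2 : ℝ) • (z.1 : EuclideanSpace ℝ (Fin n)))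
      ∂((volume : Measure (EuclideanSpace ℝ (Fin n))).toSphere.prod (Measure.volumeIoiPow (n - 1)))) ∧
    Integrable (fun z : sphere (0 : EuclideanSpace ℝ (Fin n)) 1 × Ioi (0:ℝ) => F ((z.2 : ℝ) • (z.1 : EuclideanSpace ℝ (Fin n))))
      ((volume : Measure (EuclideanSpace ℝ (Fin n))).toSphere.prod (Measure.volumeIoiPow (n - 1))) := by
  have hd : Module.finrank ℝ (EuclideanSpace ℝ (Fin n)) = n := by simp
  have hmp := (volume : Measure (EuclideanSpace ℝ (Fin n))).measurePreserving_homeomorphUnitSphereProd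
  rw [hd] at hmp
  have key : ∀ x : ({(0)}ᶜ : Set (EuclideanSpace ℝ (Fin n))),
      F (((homeomorphUnitSphereProd (EuclideanSpace ℝ (Fin n)) x).2 : ℝ) • 
        ((homeomorphUnitSphereProd (EuclideanSpace ℝ (Fin n)) x).1 : EuclideanSpace ℝ (Fin n))) = F x := by
    intro x
    congr 1
    have : (x : EuclideanSpace ℝ (Fin n)) ≠ 0 := x.2
    simp [smul_smul, this]
  constructor
  · rw [← hmp.integral_comp (Homeomorph.measurableEmbedding _)]
    simp_rw [key]
    rw [integral_subtype_comap (measurableSet_singleton _).compl F, restrict_compl_singleton]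
  · rw [← hmp.integrable_comp_emb (Homeomorph.measurableEmbedding _)]
    have : (fun z : sphere (0 : EuclideanSpace ℝ (Fin n)) 1 × Ioi (0:ℝ) => F ((z.2 : ℝ) • (z.1 : EuclideanSpace ℝ (Fin n)))) ∘ (homeomorphUnitSphereProd (EuclideanSpace ℝ (Fin n))) = F ∘ Subtype.val := by
      ext x; exact key x
    rw [this, ← integrableOn_iff_comap_subtypeVal (measurableSet_singleton _).compl]
    exact hF.integrableOn

lemma integral_volumeIoiPow (k : ℕ) (f : ℝ → ℝ) :
    ∫ x : Ioi (0 : ℝ), f x ∂.volumeIoiPow k = ∫ r in Ioi (0:ℝ), r ^ k * f r := by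
  simp only [Measure.volumeIoiPow, ENNReal.ofReal]
  rw [integral_withDensity_eq_integral_smul,
        integral_subtype_comap measurableSet_Ioi fun a ↦ Real.toNNReal (a ^ k) • f a,
        setIntegral_congr_fun measurableSet_Ioi fun x hx ↦ ?_]
  · rw [NNReal.smul_def, Real.coe_toNNReal _ (pow_nonneg hx.out.le _)]; rfl
  · exact (measurable_subtype_coe.pow_const _).real_toNNReal

lemma polar_swap (F : EuclideanSpace ℝ (Fin n) → ℝ) (hF : Integrable F) :
    ∫ x, F x = ∫ r in Ioi (0:ℝ), r ^ (n-1) * ∫ z : sphere (0 : EuclideanSpace ℝ (Fin n)) 1, 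
      F (r • (z : EuclideanSpace ℝ (Fin n))) ∂(volume : Measure (EuclideanSpace ℝ (Fin n))).toSphere := by
  obtain ⟨h1, h2⟩ := polar_aux F hF
  rw [h1, integral_prod_symm _ h2, ← integral_volumeIoiPow (n-1) (fun r => ∫ z : sphere (0 : EuclideanSpace ℝ (Fin n)) 1, 
      F (r • (z : EuclideanSpace ℝ (Fin n))) ∂(volume : Measure (EuclideanSpace ℝ (Fin n))).toSphere)]
end polar

end helperA

section helperB
open Set
lemma gauss1_int (k : ℕ) : Integrable (fun s : ℝ => s ^ k * Real.exp (-s^2)) := by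
  have := @integrable_rpow_mul_exp_neg_mul_sq 1 one_pos k (by have := Nat.cast_nonneg (α := ℝ) k; linarith)
  simpa using this

lemma radial (k : ℕ) : ∫ s in Ioi (0:ℝ), s ^ k * Real.exp (-s^2) = Real.Gamma ((k+1)/2) / 2 := by
  have := @integral_rpow_mul_exp_neg_rpow 2 k two_pos (by have := Nat.cast_nonneg (α := ℝ) k; linarith)
  simp only [Real.rpow_natCast] at this
  rw [← Nat.cast_ofNat (R := ℝ) (n := 2)] at this
  simp only [Real.rpow_natCast] at this
  rw [this]; push_cast; ring

lemma integral_odd_zero (f : ℝ → ℝ) (hf : ∀ x, f (-x) = - f x) : ∫ x, f x = 0 := by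
  have h := integral_neg_eq_self f volume
  simp_rw [hf, integral_neg] at h
  linarith

lemma gauss1_even (j : ℕ) : ∫ s : ℝ, s ^ (2*j) * Real.exp (-s^2) = Real.Gamma (j + 1/2) := by
  have h := integral_comp_abs (f := fun s : ℝ => s ^ (2*j) * Real.exp (-s^2))
  simp only [pow_mul, sq_abs] at h
  simp_rw [← pow_mul] at h
  rw [h, radial]
  rw [mul_div_cancel₀ _ two_ne_zero]
  congr 1; push_cast; ring

lemma gauss1_odd (j : ℕ) : ∫ s : ℝ, s ^ (2*j+1) * Real.exp (-s^2) = 0 := by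
  apply integral_odd_zero
  intro s; simp [Odd.neg_pow (⟨j, rfl⟩ : Odd (2*j+1))]

lemma beta_odd (j p : ℕ) : ∫ s in (-1:ℝ)..1, s ^ (2*j+1) * (1 - s^2)^p = 0 := by
  have h := intervalIntegral.integral_comp_neg (a := -1) (b := 1) (fun s : ℝ => s ^ (2*j+1) * (1 - s^2)^p)
  simp [Odd.neg_pow (⟨j, rfl⟩ : Odd (2*j+1))] at h
  linarith

lemma beta_even (p : ℕ) : ∀ j : ℕ, ∫ s in (-1:ℝ)..1, s ^ (2*j) * (1 - s^2)^p
    = Real.Gamma (j + 1/2) * p.factorial / Real.Gamma (j + p + 3/2) := by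
  induction p with
  | zero =>
    intro j
    have hj : (0:ℝ) < j + 1/2 := by positivity
    simp only [pow_zero, mul_one, integral_pow]
    rw [show ((j:ℝ) + (0:ℕ) + 3/2) = (j + 1/2) + 1 by push_cast; ring, Real.Gamma_add_one hj.ne']
    have := (Real.Gamma_pos_of_pos hj).ne'
    rw [Odd.neg_pow (⟨j, rfl⟩ : Odd (2*j+1))]
    simp only [one_pow, Nat.factorial]
    push_cast
    field_simp
    ring
  | succ p ih =>
    intro j
    have hj : (0:ℝ) < j + 1/2 := by positivity
    have h := intervalIntegral.integral_mul_deriv_eq_deriv_mul (a := -1) (b := 1)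
      (u := fun s : ℝ => (1 - s^2)^(p+1)) (v := fun s : ℝ => s ^ (2*j+1) / (2*j+1))
      (u' := fun s => (p+1) * (1 - s^2)^p * (- (2 * s))) (v' := fun s => s ^ (2*j))
      (by
        intro s _
        have h1 := (((hasDerivAt_id' s).fun_pow 2).const_sub 1).fun_pow (p+1)
        convert h1 using 1
        push_cast; simp)
      (by
        intro s _
        have h1 := ((hasDerivAt_id' s).fun_pow (2*j+1)).div_const (2*j+1 : ℝ)
        convert h1 using 1
        have : (2*j+1 : ℝ) ≠ 0 := by positivity
        push_cast; simp; field_simp)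
      (by apply Continuous.intervalIntegrable; fun_prop) (by apply Continuous.intervalIntegrable; fun_prop)
    have ih' := ih (j+1)
    have e1 : ∫ s in (-1:ℝ)..1, s ^ (2*j) * (1 - s^2)^(p+1) = ((p+1)/(j+1/2):ℝ) * ∫ s in (-1:ℝ)..1, s ^ (2*(j+1)) * (1 - s^2)^p := by
      rw [← intervalIntegral.integral_const_mul]
      simp_rw [mul_comm (_ ^ (2*j)) _]
      rw [h]
      have : (2*j+1 : ℝ) ≠ 0 := by positivity
      simp only [one_pow, sub_self, ne_eq, Nat.add_eq_zero_iff, one_ne_zero, and_false, not_false_eq_true, zero_pow, even_two, Even.neg_pow, zero_mul, zero_sub]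
      rw [← intervalIntegral.integral_neg]
      congr 1
      ext s
      field_simp
      ring
    rw [e1, ih', show (((j+1:ℕ):ℝ) + 1/2) = (j + 1/2) + 1 by push_cast; ring, Real.Gamma_add_one hj.ne',
      show ((j:ℝ) + (p+1:ℕ) + 3/2) = ((j+1:ℕ):ℝ) + p + 3/2 by push_cast; ring, Nat.factorial_succ]
    push_cast
    field_simp

end helperB

section helperC
open Set
lemma gaussN (n : ℕ) (i0 : Fin (n+1)) (R : ℝ) (k : ℕ) :
    Integrable (fun x : EuclideanSpace ℝ (Fin (n+1)) => (R * x i0) ^ k * Real.exp (-‖x‖^2)) ∧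
    ∫ x : EuclideanSpace ℝ (Fin (n+1)), (R * x i0) ^ k * Real.exp (-‖x‖^2)
      = R ^ k * (∫ s : ℝ, s ^ k * Real.exp (-s^2)) * (√Real.pi) ^ n := by
  have hg : ∫ s : ℝ, Real.exp (-s^2) = √Real.pi := by
    simpa using integral_gaussian 1
  have hgi : Integrable (fun s : ℝ => Real.exp (-s^2)) := by
    simpa using gauss1_int 0
  let f : Fin (n+1) → ℝ → ℝ := fun i s => if i = i0 then (R * s) ^ k * Real.exp (-s^2) else Real.exp (-s^2)
  have hfi : ∀ i, Integrable (f i) := by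
    intro i
    by_cases h : i = i0
    · simp only [f, h, if_true, mul_pow, mul_assoc]
      exact (gauss1_int k).const_mul _
    · simp only [f, h, if_false]; exact hgi
  have hprod : ∀ x : Fin (n+1) → ℝ, (R * (WithLp.toLp 2 x : EuclideanSpace ℝ (Fin (n+1))) i0) ^ k * Real.exp (-‖(WithLp.toLp 2 x : EuclideanSpace ℝ (Fin (n+1)))‖^2) = ∏ i, f i (x i) := by
    intro x
    rw [EuclideanSpace.norm_sq_eq, ← Finset.sum_neg_distrib, Real.exp_sum]
    have : ∀ i, f i (x i) = (if i = i0 then (R * x i)^k else 1) * Real.exp (-(x i)^2) := by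
      intro i; simp only [f]; split_ifs <;> simp
    simp_rw [this, Finset.prod_mul_distrib]
    simp
  have hmp := PiLp.volume_preserving_toLp (Fin (n+1))
  have hemb : MeasurableEmbedding (WithLp.toLp 2 : (Fin (n+1) → ℝ) → EuclideanSpace ℝ (Fin (n+1))) :=
    (MeasurableEquiv.toLp 2 (Fin (n+1) → ℝ)).measurableEmbedding
  constructor
  · rw [← hmp.integrable_comp_emb hemb]
    refine (Integrable.fintype_prod hfi).congr (Filter.Eventually.of_forall fun x => (hprod x).symm)
  · rw [← hmp.integral_comp hemb]
    simp_rw [hprod]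
    rw [integral_fintype_prod_volume_eq_prod, ← Finset.mul_prod_erase _ _ (Finset.mem_univ i0)]
    congr 1
    · simp only [f, if_true, mul_pow, mul_assoc]
      rw [integral_const_mul]
    · rw [Finset.prod_congr rfl (g := fun _ => √Real.pi)]
      · simp
      · intro i hi
        simp only [f, Finset.ne_of_mem_erase hi, if_false, hg]

lemma exists_repr (n : ℕ) (w : EuclideanSpace ℝ (Fin (n+1))) :
    ∃ b : OrthonormalBasis (Fin (n+1)) ℝ (EuclideanSpace ℝ (Fin (n+1))),
      ∀ x, inner ℝ x w = ‖w‖ * b.repr x 0 := by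
  by_cases hw : w = 0
  · exact ⟨EuclideanSpace.basisFun _ _, by simp [hw]⟩
  · have := @Orthonormal.exists_orthonormalBasis_extension_of_card_eq ℝ _ (EuclideanSpace ℝ (Fin (n+1))) _ _ _ (Fin (n+1)) _
      (by simp) (fun _ => ‖w‖⁻¹ • w) {0} (by
        constructor
        · intro i; simp [norm_smul, hw]
        · intro i j hij; exact absurd (Subsingleton.elim i j) hij)
    obtain ⟨b, hb⟩ := this
    refine ⟨b, fun x => ?_⟩
    rw [b.repr_apply_apply, hb 0 rfl, inner_smul_left, real_inner_comm]
    have : ‖w‖ ≠ 0 := by simpa using hw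
    simp; field_simp

lemma gaussE (n : ℕ) (w : EuclideanSpace ℝ (Fin (n+1))) (k : ℕ) :
    Integrable (fun x : EuclideanSpace ℝ (Fin (n+1)) => (inner ℝ x w) ^ k * Real.exp (-‖x‖^2)) ∧
    ∫ x : EuclideanSpace ℝ (Fin (n+1)), (inner ℝ x w) ^ k * Real.exp (-‖x‖^2)
      = ‖w‖ ^ k * (∫ s : ℝ, s ^ k * Real.exp (-s^2)) * (√Real.pi) ^ n := by
  obtain ⟨b, hb⟩ := exists_repr n w
  have hmp := b.measurePreserving_repr
  have hemb : MeasurableEmbedding b.repr := b.repr.toHomeomorph.measurableEmbedding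
  obtain ⟨h1, h2⟩ := gaussN n 0 ‖w‖ k
  rw [← hmp.integrable_comp_emb hemb] at h1
  rw [← hmp.integral_comp hemb] at h2
  simp only [Function.comp_def, LinearIsometryEquiv.norm_map, ← hb] at h1 h2
  exact ⟨h1, h2⟩

lemma moment1 (n : ℕ) (w : EuclideanSpace ℝ (Fin (n+1))) (k : ℕ) :
    ∫ z : sphere (0 : EuclideanSpace ℝ (Fin (n+1))) 1, (inner ℝ (z : EuclideanSpace ℝ (Fin (n+1))) w) ^ k
       ∂(volume : Measure (EuclideanSpace ℝ (Fin (n+1)))).toSphere =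
      2 * ‖w‖ ^ k * (∫ s : ℝ, s ^ k * Real.exp (-s^2)) * (√Real.pi) ^ n / Real.Gamma ((n+k+1)/2) := by
  obtain ⟨h1, h2⟩ := gaussE n w k
  have hG : 0 < Real.Gamma ((n+k+1)/2) := Real.Gamma_pos_of_pos (by positivity)
  rw [polar_swap _ h1] at h2
  have : ∀ r ∈ Ioi (0:ℝ), (r ^ (n + 1 - 1) * ∫ z : sphere (0 : EuclideanSpace ℝ (Fin (n+1))) 1, (inner ℝ (r • (z : EuclideanSpace ℝ (Fin (n+1)))) w) ^ k * Real.exp (-‖r • (z : EuclideanSpace ℝ (Fin (n+1)))‖^2) ∂(volume : Measure (EuclideanSpace ℝ (Fin (n+1)))).toSphere)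
      = (r ^ (n+k) * Real.exp (-r^2)) * ∫ z : sphere (0 : EuclideanSpace ℝ (Fin (n+1))) 1, (inner ℝ (z : EuclideanSpace ℝ (Fin (n+1))) w) ^ k
       ∂(volume : Measure (EuclideanSpace ℝ (Fin (n+1)))).toSphere := by
    intro r hr
    rw [← integral_const_mul, ← integral_const_mul]
    congr 1
    ext z
    have hz : ‖(z : EuclideanSpace ℝ (Fin (n+1)))‖ = 1 := by simp
    rw [norm_smul, hz, mul_one, Real.norm_eq_abs, sq_abs, inner_smul_left, mul_pow, pow_add]
    simp
    ring
  rw [setIntegral_congr_fun measurableSet_Ioi this, integral_mul_const, radial] at h2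
  push_cast at h2
  rw [eq_div_iff hG.ne']
  linarith

lemma moment2 (p : ℕ) (w : EuclideanSpace ℝ (Fin (2*p+3))) (k : ℕ) :
    ∫ z : sphere (0 : EuclideanSpace ℝ (Fin (2*p+3))) 1, (inner ℝ (z : EuclideanSpace ℝ (Fin (2*p+3))) w) ^ k
       ∂(volume : Measure (EuclideanSpace ℝ (Fin (2*p+3)))).toSphere =
      (2 * Real.pi ^ (p+1) / p.factorial) * ∫ s in (-1:ℝ)..1, (‖w‖ * s) ^ k * (1 - s^2)^p := by
  rw [moment1 (2*p+2) w k]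
  simp_rw [mul_pow, mul_assoc]
  rw [intervalIntegral.integral_const_mul]
  have hpi : (√Real.pi) ^ (2*p+2) = Real.pi ^ (p+1) := by
    rw [show 2*p+2 = 2*(p+1) by ring, pow_mul, Real.sq_sqrt Real.pi_pos.le]
  rw [hpi]
  rcases Nat.even_or_odd' k with ⟨j, rfl | rfl⟩
  · rw [gauss1_even, beta_even]
    have e : (((2*p+2:ℕ):ℝ) + (2*j:ℕ) + 1)/2 = j + p + 3/2 := by push_cast; ring
    rw [e]
    have : (p.factorial : ℝ) ≠ 0 := by positivity
    have hG : Real.Gamma (j+p+3/2) ≠ 0 := (Real.Gamma_pos_of_pos (by positivity)).ne'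
    field_simp
  · rw [gauss1_odd, beta_odd]; simp

lemma slice (p : ℕ) (w : EuclideanSpace ℝ (Fin (2*p+3))) (h : ℝ → ℝ) (hc : Continuous h) :
    ∫ z : sphere (0 : EuclideanSpace ℝ (Fin (2*p+3))) 1, h (inner ℝ (z : EuclideanSpace ℝ (Fin (2*p+3))) w)
       ∂(volume : Measure (EuclideanSpace ℝ (Fin (2*p+3)))).toSphere =
      (2 * Real.pi ^ (p+1) / p.factorial) * ∫ s in (-1:ℝ)..1, h (‖w‖ * s) * (1 - s^2)^p := by
  set μ := (volume : Measure (EuclideanSpace ℝ (Fin (2*p+3)))).toSphere with hμ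
  set W := (2 * Real.pi ^ (p+1) / p.factorial) with hW
  have hWpos : 0 ≤ W := by positivity
  have hint : ∀ g : ℝ → ℝ, Continuous g → Integrable (fun z : sphere (0 : EuclideanSpace ℝ (Fin (2*p+3))) 1 => g (inner ℝ (z : EuclideanSpace ℝ (Fin (2*p+3))) w)) μ := by
    intro g hg
    apply Continuous.integrable_of_hasCompactSupport (by fun_prop)
    exact HasCompactSupport.of_compactSpace _
  have hint2 : ∀ g : ℝ → ℝ, Continuous g → IntervalIntegrable (fun s => g (‖w‖ * s) * (1 - s^2)^p) volume (-1) 1 := by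
    intro g hg
    apply Continuous.intervalIntegrable; fun_prop
  have hpoly : ∀ q : Polynomial ℝ, ∫ z : sphere (0 : EuclideanSpace ℝ (Fin (2*p+3))) 1, q.eval (inner ℝ (z : EuclideanSpace ℝ (Fin (2*p+3))) w) ∂μ = W * ∫ s in (-1:ℝ)..1, q.eval (‖w‖ * s) * (1 - s^2)^p := by
    intro q
    induction q using Polynomial.induction_on' with
    | add q1 q2 h1 h2 =>
      simp only [Polynomial.eval_add, add_mul]
      rw [integral_add (hint _ q1.continuous) (hint _ q2.continuous), h1, h2, 
        intervalIntegral.integral_add (hint2 _ q1.continuous) (hint2 _ q2.continuous), mul_add]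
    | monomial k c =>
      simp only [Polynomial.eval_monomial, mul_assoc]
      rw [integral_const_mul, moment2, intervalIntegral.integral_const_mul]
      ring
  have hbd : ∀ δ > 0, |(∫ z : sphere (0 : EuclideanSpace ℝ (Fin (2*p+3))) 1, h (inner ℝ (z : EuclideanSpace ℝ (Fin (2*p+3))) w) ∂μ) - W * ∫ s in (-1:ℝ)..1, h (‖w‖ * s) * (1 - s^2)^p| ≤ δ * (μ.real univ + W * 2) := by
    intro δ hδ
    obtain ⟨q, hq⟩ := exists_polynomial_near_of_continuousOn (-‖w‖) ‖w‖ h hc.continuousOn δ hδ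
    have e : (∫ z : sphere (0 : EuclideanSpace ℝ (Fin (2*p+3))) 1, h (inner ℝ (z : EuclideanSpace ℝ (Fin (2*p+3))) w) ∂μ) - W * (∫ s in (-1:ℝ)..1, h (‖w‖ * s) * (1 - s^2)^p)
      = (∫ z : sphere (0 : EuclideanSpace ℝ (Fin (2*p+3))) 1, (h (inner ℝ (z : EuclideanSpace ℝ (Fin (2*p+3))) w) - q.eval (inner ℝ (z : EuclideanSpace ℝ (Fin (2*p+3))) w)) ∂μ) - W * ∫ s in (-1:ℝ)..1, (h (‖w‖ * s) - q.eval (‖w‖ * s)) * (1 - s^2)^p := by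
      rw [integral_sub (hint _ hc) (hint _ q.continuous)]
      simp_rw [sub_mul]
      rw [intervalIntegral.integral_sub (hint2 _ hc) (hint2 _ q.continuous), hpoly]
      ring
    rw [e]
    have b1 : ‖∫ z : sphere (0 : EuclideanSpace ℝ (Fin (2*p+3))) 1, (h (inner ℝ (z : EuclideanSpace ℝ (Fin (2*p+3))) w) - q.eval (inner ℝ (z : EuclideanSpace ℝ (Fin (2*p+3))) w)) ∂μ‖ ≤ δ * μ.real univ := by
      apply norm_integral_le_of_norm_le_const
      refine Filter.Eventually.of_forall fun z => ?_
      have hz : ‖(z : EuclideanSpace ℝ (Fin (2*p+3)))‖ = 1 := by simp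
      have := abs_real_inner_le_norm (z : EuclideanSpace ℝ (Fin (2*p+3))) w
      rw [hz, one_mul, abs_le] at this
      rw [Real.norm_eq_abs, abs_sub_comm]
      exact (hq _ this).le
    have b2 : ‖∫ s in (-1:ℝ)..1, (h (‖w‖ * s) - q.eval (‖w‖ * s)) * (1 - s^2)^p‖ ≤ δ * |1 - (-1)| := by
      apply intervalIntegral.norm_integral_le_of_norm_le_const
      intro s hs
      rw [uIoc_of_le (by norm_num)] at hs
      rw [norm_mul, Real.norm_eq_abs, Real.norm_eq_abs, abs_sub_comm, ← mul_one δ]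
      have hs2 : s^2 ≤ 1 := by nlinarith [hs.1, hs.2]
      gcongr
      · refine (hq _ ⟨?_, ?_⟩).le <;> nlinarith [norm_nonneg w, hs.1, hs.2]
      · rw [abs_of_nonneg (by apply pow_nonneg; linarith)]
        apply pow_le_one₀ <;> nlinarith
    rw [Real.norm_eq_abs] at b1 b2
    rw [show |(1:ℝ) - (-1)| = 2 by norm_num] at b2
    refine (abs_sub _ _).trans ?_
    rw [abs_mul, abs_of_nonneg hWpos]
    nlinarith
  have : |(∫ z : sphere (0 : EuclideanSpace ℝ (Fin (2*p+3))) 1, h (inner ℝ (z : EuclideanSpace ℝ (Fin (2*p+3))) w) ∂μ) - W * ∫ s in (-1:ℝ)..1, h (‖w‖ * s) * (1 - s^2)^p| ≤ 0 := by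
    have hC : 0 < μ.real univ + W * 2 + 1 := by positivity
    apply le_of_forall_pos_le_add
    intro δ hδ
    refine (hbd (δ / (μ.real univ + W * 2 + 1)) (by positivity)).trans ?_
    rw [zero_add, div_mul_eq_mul_div, div_le_iff₀ hC]
    nlinarith
  have := abs_nonpos_iff.mp this
  linarith

end helperC

section helperD
open Set
lemma iter_zero {χ : ℝ → ℝ} {ε : ℝ} (h0 : ∀ v, ε ≤ |v| → χ v = 0) (k : ℕ) :
    ∀ v, ε < |v| → iteratedDeriv k χ v = 0 := by
  induction k with
  | zero => intro v hv; simpa using h0 v hv.le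
  | succ k ih =>
    intro v hv
    rw [iteratedDeriv_succ]
    have : iteratedDeriv k χ =ᶠ[nhds v] fun _ => 0 := by
      have ho : IsOpen {v : ℝ | ε < |v|} := isOpen_lt continuous_const continuous_abs
      filter_upwards [ho.mem_nhds hv] with u hu using ih u hu
    rw [this.deriv_eq]; simp

lemma iter_hasDeriv {χ : ℝ → ℝ} (hχ : ContDiff ℝ (⊤:ℕ∞) χ) (k : ℕ) (v : ℝ) :
    HasDerivAt (iteratedDeriv k χ) (iteratedDeriv (k+1) χ v) v := by
  rw [iteratedDeriv_succ]
  exact ((hχ.differentiable_iteratedDeriv k (by exact_mod_cast WithTop.coe_lt_top k)) v).hasDerivAt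

lemma iter_cont {χ : ℝ → ℝ} (hχ : ContDiff ℝ (⊤:ℕ∞) χ) (k : ℕ) : Continuous (iteratedDeriv k χ) :=
  hχ.continuous_iteratedDeriv k (by exact_mod_cast le_top)

lemma ibp_poly {χ : ℝ → ℝ} (hχ : ContDiff ℝ (⊤:ℕ∞) χ) {ε : ℝ} 
    (h0 : ∀ v, ε ≤ |v| → χ v = 0) {a r : ℝ} (hr : 0 < r) (har : |a| + ε < 2 * r) (k : ℕ) :
    ∀ q : Polynomial ℝ, ∫ s in (-1:ℝ)..1, iteratedDeriv k χ (a - 2*r*s) * q.eval s =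
      (1/(2*r))^k * ∫ s in (-1:ℝ)..1, χ (a - 2*r*s) * (Polynomial.derivative^[k] q).eval s := by
  have hb := abs_le.1 (le_refl |a|)
  have hbd1 : ε < |a - 2*r*1| := by rw [lt_abs]; right; linarith
  have hbd2 : ε < |a - 2*r*(-1)| := by rw [lt_abs]; left; linarith
  induction k with
  | zero => intro q; simp
  | succ k ih =>
    intro q
    have hc := iter_cont hχ k
    have hc' := iter_cont hχ (k+1)
    have h := intervalIntegral.integral_mul_deriv_eq_deriv_mul (a := -1) (b := 1)
      (u := fun s : ℝ => q.eval s) (v := fun s : ℝ => iteratedDeriv k χ (a - 2*r*s))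
      (u' := fun s => (Polynomial.derivative q).eval s) (v' := fun s => iteratedDeriv (k+1) χ (a - 2*r*s) * (-(2*r)))
      (fun s _ => q.hasDerivAt s)
      (by
        intro s _
        have h1 : HasDerivAt (fun s : ℝ => a - 2*r*s) (-(2*r)) s := by
          simpa using ((hasDerivAt_id' s).const_mul (2*r)).const_sub a
        exact (iter_hasDeriv hχ k (a-2*r*s)).comp s h1)
      (by apply Continuous.intervalIntegrable; exact (Polynomial.derivative q).continuous) 
      (by apply Continuous.intervalIntegrable; fun_prop)
    simp only [iter_zero h0 k _ hbd1, iter_zero h0 k _ hbd2] at h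
    have e : ∫ s in (-1:ℝ)..1, iteratedDeriv (k+1) χ (a - 2*r*s) * q.eval s = (1/(2*r)) * ∫ s in (-1:ℝ)..1, iteratedDeriv k χ (a - 2*r*s) * (Polynomial.derivative q).eval s := by
      have h2 : ∫ s in (-1:ℝ)..1, q.eval s * (iteratedDeriv (k+1) χ (a - 2*r*s) * (-(2*r))) = (-(2*r)) * ∫ s in (-1:ℝ)..1, iteratedDeriv (k+1) χ (a - 2*r*s) * q.eval s := by
        rw [← intervalIntegral.integral_const_mul]; congr 1; ext s; ring
      rw [h2] at h
      simp_rw [mul_comm (iteratedDeriv k χ _)]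
      field_simp
      linarith
    rw [e, ih, Function.iterate_succ_apply]
    ring

lemma poly_deriv (p : ℕ) : (Polynomial.derivative^[2*p] ((1 - Polynomial.X^2 : Polynomial ℝ)^p)) 
    = Polynomial.C ((-1:ℝ)^p * ((2*p).factorial : ℝ)) := by
  have hd1 : (1 - Polynomial.X^2 : Polynomial ℝ).natDegree ≤ 2 := by compute_degree
  have hd : ((1 - Polynomial.X^2 : Polynomial ℝ)^p).natDegree ≤ 2 * p := by
    have := Polynomial.natDegree_pow_le_of_le p hd1
    linarith
  have h0 : (Polynomial.derivative^[2*p] ((1 - Polynomial.X^2 : Polynomial ℝ)^p)).natDegree ≤ 0 := by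
    refine (Polynomial.natDegree_iterate_derivative _ _).trans ?_
    omega
  rw [Polynomial.eq_C_of_natDegree_le_zero h0, Polynomial.coeff_iterate_derivative]
  congr 1
  have hcoef : ((1 - Polynomial.X^2 : Polynomial ℝ)^p).coeff (2*p) = (-1)^p := by
    rw [mul_comm 2 p, Polynomial.coeff_pow_of_natDegree_le hd1]
    congr 1
    simp [Polynomial.coeff_one]
  rw [zero_add, hcoef, Nat.descFactorial_self]
  simp [mul_comm]

lemma J_eq {χ : ℝ → ℝ} (hχ : ContDiff ℝ (⊤:ℕ∞) χ) {ε : ℝ} 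
    (h0 : ∀ v, ε ≤ |v| → χ v = 0) (hI : ∫ v, χ v = 1) {a r : ℝ} (hr : 0 < r) (har : |a| + ε < 2 * r) (p : ℕ) :
    ∫ s in (-1:ℝ)..1, iteratedDeriv (2*p) χ (a - 2*r*s) * (1-s^2)^p =
      (-1)^p * (2*p).factorial * (1/(2*r))^(2*p+1) := by
  have h := ibp_poly hχ h0 hr har (2*p) ((1 - Polynomial.X^2)^p)
  rw [poly_deriv] at h
  simp only [Polynomial.eval_pow, Polynomial.eval_sub, Polynomial.eval_one, Polynomial.eval_X, Polynomial.eval_C] at h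
  rw [h, intervalIntegral.integral_mul_const]
  have hb := abs_le.1 (le_refl |a|)
  have : ∫ s in (-1:ℝ)..1, χ (a - 2*r*s) = 1/(2*r) := by
    rw [intervalIntegral.integral_comp_sub_mul χ (by positivity : 2*r ≠ 0), intervalIntegral.integral_of_le (by linarith), setIntegral_eq_integral_of_forall_compl_eq_zero, hI]
    · simp
    · intro v hv
      apply h0
      by_contra hc
      push Not at hc
      rw [abs_lt] at hc
      apply hv
      constructor <;> linarith
  rw [this]; ring

lemma ibp_D {χ : ℝ → ℝ} (hχ : ContDiff ℝ (⊤:ℕ∞) χ) {ε : ℝ} 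
    (h0 : ∀ v, ε ≤ |v| → χ v = 0) {α β c : ℝ} (hα : 0 < α) (hαβ : α ≤ β) (h1 : ε < c - α^2) (h2 : ε < β^2 - c) (k : ℕ) :
    ∀ G : ℝ → ℝ, (∀ k, ∀ t > 0, DifferentiableAt ℝ (Dop^[k] G) t) → 
      ∫ t in α..β, Dop^[k] G t * χ (t^2 - c) * (2*t) = (-1)^k * ∫ t in α..β, G t * iteratedDeriv k χ (t^2-c) * (2*t) := by
  have hbd1 : ε < |α^2 - c| := by rw [lt_abs]; right; linarith
  have hbd2 : ε < |β^2 - c| := by rw [lt_abs]; left; linarith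
  induction k with
  | zero => intro G _; simp
  | succ k ih =>
    intro G hG
    have hc := iter_cont hχ k
    have hc' := iter_cont hχ (k+1)
    have hpos : ∀ t ∈ uIcc α β, 0 < t := by
      intro t ht; rw [uIcc_of_le hαβ] at ht; linarith [ht.1]
    rw [Function.iterate_succ_apply, ih (Dop G) (fun j t ht => by
      have := hG (j+1) t ht; rwa [Function.iterate_succ_apply] at this)]
    have hGd : ∀ t ∈ uIcc α β, HasDerivAt G (2 * t * Dop G t) t := by
      intro t ht
      have hd : HasDerivAt G (deriv G t) t := (hG 0 t (hpos t ht)).hasDerivAt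
      have ht' := (hpos t ht).ne'
      have e : 2 * t * Dop G t = deriv G t := by simp only [Dop]; field_simp
      rw [e]; exact hd
    have hDc : ContinuousOn (Dop G) (uIcc α β) := fun t ht => 
      (hG 1 t (hpos t ht)).continuousAt.continuousWithinAt
    have h := intervalIntegral.integral_mul_deriv_eq_deriv_mul (a := α) (b := β)
      (u := G) (v := fun t : ℝ => iteratedDeriv k χ (t^2-c))
      (u' := fun t => 2 * t * Dop G t) (v' := fun t => iteratedDeriv (k+1) χ (t^2-c) * (2*t))
      hGd
      (by
        intro s _
        have h1 : HasDerivAt (fun s : ℝ => s^2-c) (2*s) s := by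
          simpa using ((hasDerivAt_id' s).fun_pow 2).sub_const c
        exact (iter_hasDeriv hχ k (s^2-c)).comp s h1)
      (by apply ContinuousOn.intervalIntegrable; fun_prop) 
      (by apply Continuous.intervalIntegrable; fun_prop)
    simp only [iter_zero h0 k _ hbd1, iter_zero h0 k _ hbd2] at h
    have e1 : ∫ t in α..β, Dop G t * iteratedDeriv k χ (t^2-c) * (2*t) = ∫ t in α..β, 2 * t * Dop G t * iteratedDeriv k χ (t^2-c) := by
      congr 1; ext t; ring
    have e2 : ∫ t in α..β, G t * iteratedDeriv (k+1) χ (t^2-c) * (2*t) = ∫ t in α..β, G t * (iteratedDeriv (k+1) χ (t^2-c) * (2*t)) := by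
      congr 1; ext t; ring
    rw [e1, e2, h]
    ring

end helperD

section helperE
open Set
section rep
variable {V : Type*} [NormedAddCommGroup V] [NormedSpace ℝ V] [FiniteDimensional ℝ V] [MeasurableSpace V] [BorelSpace V]

def Upos (V : Type*) : Set (V × ℝ × V) := {z | 0 < z.2.1}

lemma Upos_open : IsOpen (Upos V) := isOpen_lt continuous_const (by fun_prop)

lemma cont_rep (μ : Measure (sphere (0:V) 1)) [IsFiniteMeasure μ] {A : V × ℝ × V → ℝ} (hA : ContinuousOn A (Upos V)) :
    ContinuousOn (fun y : V × ℝ => ∫ z, A (y.1, y.2, (z : V)) ∂μ) {y | 0 < y.2} := by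
  apply continuousOn_integral_of_compact_support (k := univ) isCompact_univ
  · have : (Function.uncurry fun (y : V × ℝ) (z : sphere (0:V) 1) => A (y.1, y.2, (z:V))) = A ∘ (fun w : (V × ℝ) × sphere (0:V) 1 => (w.1.1, w.1.2, (w.2 : V))) := rfl
    rw [this]
    apply hA.comp (by fun_prop)
    rintro ⟨y, z⟩ hy
    exact hy.1
  · intro _ _ _ h; exact absurd (mem_univ _) h

lemma deriv_rep (μ : Measure (sphere (0:V) 1)) [IsFiniteMeasure μ] {A : V × ℝ × V → ℝ} (hA : ContDiffOn ℝ (⊤:ℕ∞) A (Upos V)) :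
    ∃ A' : V × ℝ × V → ℝ, ContDiffOn ℝ (⊤:ℕ∞) A' (Upos V) ∧ ∀ θ : V, ∀ t > 0, 
      HasDerivAt (fun t : ℝ => ∫ z, A (θ, t, (z : V)) ∂μ) (2 * t * ∫ z, A' (θ, t, (z:V)) ∂μ) t := by
  have hB : ContDiffOn ℝ (⊤:ℕ∞) (fun w => fderiv ℝ A w (0, 1, 0)) (Upos V) := by
    have := hA.fderiv_of_isOpen (m := (⊤:ℕ∞)) Upos_open (by simp)
    exact this.clm_apply contDiffOn_const
  refine ⟨fun w => (1 / (2 * w.2.1)) * fderiv ℝ A w (0, 1, 0), ?_, ?_⟩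
  · apply ContDiffOn.mul _ hB
    apply ContDiffOn.div contDiffOn_const (by fun_prop)
    intro w hw
    have : 0 < w.2.1 := hw
    positivity
  · intro θ t ht
    have hcont : ∀ (C : V × ℝ × V → ℝ), ContinuousOn C (Upos V) → ∀ s > 0, Continuous (fun z : sphere (0:V) 1 => C (θ, s, (z:V))) := by
      intro C hC s hs
      apply hC.comp_continuous (by fun_prop)
      intro z; exact hs
    have hK : IsCompact (Icc (t/2) (2*t) ×ˢ (univ : Set (sphere (0:V) 1))) := isCompact_Icc.prod isCompact_univ
    obtain ⟨M, hM⟩ := hK.exists_bound_of_continuousOn (f := fun w : ℝ × sphere (0:V) 1 => fderiv ℝ A (θ, w.1, (w.2:V)) (0,1,0)) (by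
      apply hB.continuousOn.comp (t := Upos V) (f := fun w : ℝ × sphere (0:V) 1 => (θ, w.1, (w.2:V))) (by fun_prop)
      rintro ⟨s, z⟩ hs
      have := hs.1.1
      show 0 < s
      simp at this
      linarith)
    have key := hasDerivAt_integral_of_dominated_loc_of_deriv_le (μ := μ) (x₀ := t) (s := Icc (t/2) (2*t))
      (F := fun (s : ℝ) (z : sphere (0:V) 1) => A (θ, s, (z:V))) 
      (F' := fun (s : ℝ) (z : sphere (0:V) 1) => fderiv ℝ A (θ, s, (z:V)) (0,1,0)) (bound := fun _ => M)
      (Icc_mem_nhds (by linarith) (by linarith))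
      (by 
        filter_upwards [lt_mem_nhds ht] with s hs
        exact (hcont A hA.continuousOn s hs).aestronglyMeasurable)
      ((hcont A hA.continuousOn t ht).integrable_of_hasCompactSupport (HasCompactSupport.of_compactSpace _))
      (hcont _ hB.continuousOn t ht).aestronglyMeasurable
      (Filter.Eventually.of_forall fun z s hs => hM (s, z) ⟨hs, mem_univ _⟩)
      (integrable_const M)
      (Filter.Eventually.of_forall fun z s hs => by
        have hs0 : 0 < s := by linarith [hs.1]
        have hd : HasFDerivAt A (fderiv ℝ A (θ, s, (z:V))) (θ, s, (z:V)) :=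
          ((hA.contDiffAt (Upos_open.mem_nhds hs0)).differentiableAt (by simp)).hasFDerivAt
        have hl : HasDerivAt (fun s : ℝ => (θ, s, (z:V))) (0, 1, 0) s :=
          (hasDerivAt_const s θ).prodMk ((hasDerivAt_id s).prodMk (hasDerivAt_const s (z:V)))
        exact hd.comp_hasDerivAt s hl)
    have h2 := key.2
    refine h2.congr_deriv ?_
    dsimp only
    rw [integral_const_mul]
    field_simp

lemma iter_rep (μ : Measure (sphere (0:V) 1)) [IsFiniteMeasure μ] (G : V → ℝ → ℝ) {A : V × ℝ × V → ℝ} (hA : ContDiffOn ℝ (⊤:ℕ∞) A (Upos V))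
    (hG : ∀ θ, ∀ t > 0, G θ t = ∫ z, A (θ, t, (z : V)) ∂μ) (k : ℕ) :
    ∃ A' : V × ℝ × V → ℝ, ContDiffOn ℝ (⊤:ℕ∞) A' (Upos V) ∧ ∀ θ : V, ∀ t > 0, Dop^[k] (G θ) t = ∫ z, A' (θ, t, (z:V)) ∂μ := by
  induction k with
  | zero => exact ⟨A, hA, hG⟩
  | succ k ih =>
    obtain ⟨B, hB, h⟩ := ih
    obtain ⟨B', hB', h'⟩ := deriv_rep μ hB
    refine ⟨B', hB', fun θ t ht => ?_⟩
    rw [Function.iterate_succ_apply']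
    have he : Dop^[k] (G θ) =ᶠ[nhds t] (fun t : ℝ => ∫ z, B (θ, t, (z : V)) ∂μ) := by
      filter_upwards [lt_mem_nhds ht] with s hs using h θ s hs
    simp only [Dop]
    rw [he.deriv_eq, (h' θ t ht).deriv]
    field_simp

lemma iter_diff (μ : Measure (sphere (0:V) 1)) [IsFiniteMeasure μ] (G : V → ℝ → ℝ) {A : V × ℝ × V → ℝ} (hA : ContDiffOn ℝ (⊤:ℕ∞) A (Upos V))
    (hG : ∀ θ, ∀ t > 0, G θ t = ∫ z, A (θ, t, (z : V)) ∂μ) (k : ℕ) (θ : V) (t : ℝ) (ht : 0 < t) :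
    DifferentiableAt ℝ (Dop^[k] (G θ)) t := by
  obtain ⟨B, hB, h⟩ := iter_rep μ G hA hG k
  obtain ⟨B', hB', h'⟩ := deriv_rep μ hB
  have he : Dop^[k] (G θ) =ᶠ[nhds t] (fun t : ℝ => ∫ z, B (θ, t, (z : V)) ∂μ) := by
      filter_upwards [lt_mem_nhds ht] with s hs using h θ s hs
  exact ((h' θ t ht).congr_of_eventuallyEq he).differentiableAt

lemma iter_cont_joint (μ : Measure (sphere (0:V) 1)) [IsFiniteMeasure μ] (G : V → ℝ → ℝ) {A : V × ℝ × V → ℝ} (hA : ContDiffOn ℝ (⊤:ℕ∞) A (Upos V))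
    (hG : ∀ θ, ∀ t > 0, G θ t = ∫ z, A (θ, t, (z : V)) ∂μ) (k : ℕ) :
    ContinuousOn (fun y : V × ℝ => Dop^[k] (G y.1) y.2) {y | 0 < y.2} := by
  obtain ⟨B, hB, h⟩ := iter_rep μ G hA hG k
  exact (cont_rep μ hB.continuousOn).congr (fun y hy => h y.1 y.2 hy)
end rep

end helperE

section helperF
open Set
structure Nice (χ : ℝ → ℝ) (ε : ℝ) : Prop where
  smooth : ContDiff ℝ (⊤:ℕ∞) χ
  nonneg : ∀ v, 0 ≤ χ v
  zero : ∀ v, ε ≤ |v| → χ v = 0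
  int : ∫ v, χ v = 1

lemma exists_nice (m : ℕ) : ∃ χ : ℝ → ℝ → ℝ, ∃ C : ℝ, 0 ≤ C ∧ ∀ ε > 0, Nice (χ ε) ε ∧ ∀ v, |iteratedDeriv m (χ ε) v| ≤ C * (1/ε)^(m+1) := by
  let b : ContDiffBump (0:ℝ) := ⟨1/2, 1, by norm_num, by norm_num⟩
  let ψ := b.normed volume
  have hψ : ContDiff ℝ (⊤:ℕ∞) ψ := b.contDiff_normed
  have hsupp : ∀ v, 1 ≤ |v| → ψ v = 0 := by
    intro v hv
    have : v ∉ Function.support ψ := by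
      rw [b.support_normed_eq]
      simpa [b] using hv
    simpa using this
  have hbc : HasCompactSupport (iteratedDeriv m ψ) := by
    apply HasCompactSupport.intro (isCompact_closedBall (0:ℝ) 1)
    intro v hv
    apply iter_zero hsupp
    simpa using hv
  obtain ⟨C, hC⟩ := hbc.exists_bound_of_continuous (iter_cont hψ m)
  refine ⟨fun ε v => (1/ε) * ψ ((1/ε) * v), C, (norm_nonneg _).trans (hC 0), fun ε hε => ⟨⟨?_, ?_, ?_, ?_⟩, ?_⟩⟩
  · exact contDiff_const.mul (hψ.comp (contDiff_const.mul contDiff_id))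
  · intro v
    have := b.nonneg_normed (μ := volume) ((1/ε) * v)
    positivity
  · intro v hv
    simp only
    rw [hsupp, mul_zero]
    rw [abs_mul, abs_of_pos (by positivity), ← mul_div_right_comm, one_mul, le_div_iff₀ hε]
    linarith
  · rw [integral_const_mul, Measure.integral_comp_mul_left ψ, b.integral_normed]
    rw [abs_of_pos (by positivity)]
    simp; field_simp
  · intro v
    rw [iteratedDeriv_const_mul_field, iteratedDeriv_comp_const_mul (hψ.of_le (by exact_mod_cast le_top))]
    simp only [abs_mul, abs_pow]
    rw [abs_of_pos (by positivity : 0 < 1/ε), pow_succ]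
    have := hC ((1/ε) * v)
    rw [Real.norm_eq_abs] at this
    have hp : 0 ≤ (1/ε)^m * (1/ε) := by positivity
    calc _ = ((1/ε)^m * (1/ε)) * |iteratedDeriv m ψ (1/ε * v)| := by ring
      _ ≤ ((1/ε)^m * (1/ε)) * C := by gcongr
      _ = _ := by ring

lemma inner_int {χ : ℝ → ℝ} {ε : ℝ} (h : Nice χ ε) {α β c : ℝ} (hα : 0 < α) (hαβ : α ≤ β) (h1 : ε < c - α^2) (h2 : ε < β^2 - c) :
    ∫ t in α..β, χ (t^2 - c) * (2*t) = 1 := by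
  have hd : ∀ s ∈ uIcc α β, HasDerivAt (fun s : ℝ => s^2-c) (2*s) s := by
    intro s _
    simpa using ((hasDerivAt_id' s).fun_pow 2).sub_const c
  have := intervalIntegral.integral_comp_mul_deriv (g := χ) hd (by fun_prop) h.smooth.continuous
  simp only [Function.comp_def] at this
  rw [this, intervalIntegral.integral_of_le (by nlinarith), setIntegral_eq_integral_of_forall_compl_eq_zero, h.int]
  intro v hv
  apply h.zero
  by_contra hc
  push Not at hc
  rw [abs_lt] at hc
  apply hv
  constructor <;> linarith

lemma inner_close {χ : ℝ → ℝ} {ε : ℝ} (h : Nice χ ε) {α β t0 δ : ℝ} (hα : 0 < α) (hαβ : α ≤ β) (h1 : ε < t0^2 - α^2) (h2 : ε < β^2 - t0^2)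
    (g : ℝ → ℝ) (hg : ContinuousOn g (Icc α β)) (hclose : ∀ t ∈ Icc α β, |t^2 - t0^2| < ε → |g t - g t0| ≤ δ) :
    |(∫ t in α..β, g t * χ (t^2 - t0^2) * (2*t)) - g t0| ≤ δ := by
  have hχc := h.smooth.continuous
  have hI := inner_int h hα hαβ h1 h2
  have i1 : IntervalIntegrable (fun t => g t * χ (t^2 - t0^2) * (2*t)) volume α β := by
    apply ContinuousOn.intervalIntegrable
    rw [uIcc_of_le hαβ]; fun_prop
  have i2 : IntervalIntegrable (fun t => g t0 * (χ (t^2 - t0^2) * (2*t))) volume α β := by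
    apply Continuous.intervalIntegrable; fun_prop
  have i3 : IntervalIntegrable (fun t => δ * (χ (t^2 - t0^2) * (2*t))) volume α β := by
    apply Continuous.intervalIntegrable; fun_prop
  have e : (∫ t in α..β, g t * χ (t^2 - t0^2) * (2*t)) - g t0 = ∫ t in α..β, (g t * χ (t^2 - t0^2) * (2*t) - g t0 * (χ (t^2 - t0^2) * (2*t))) := by
    rw [intervalIntegral.integral_sub i1 i2, intervalIntegral.integral_const_mul, hI, mul_one]
  rw [e]
  refine (intervalIntegral.abs_integral_le_integral_abs hαβ).trans ?_
  have e3 : ∫ t in α..β, δ * (χ (t^2 - t0^2) * (2*t)) = δ := by rw [intervalIntegral.integral_const_mul, hI, mul_one]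
  rw [← e3]
  apply intervalIntegral.integral_mono_on hαβ (i1.sub i2).abs i3
  intro t ht
  have ht0 : 0 < t := by linarith [ht.1]
  have e4 : g t * χ (t^2 - t0^2) * (2*t) - g t0 * (χ (t^2 - t0^2) * (2*t)) = (g t - g t0) * (χ (t^2 - t0^2) * (2*t)) := by ring
  rw [e4, abs_mul, abs_of_nonneg (mul_nonneg (h.nonneg _) (by positivity) : 0 ≤ χ (t^2 - t0^2) * (2*t))]
  by_cases hc : |t^2 - t0^2| < ε
  · have := hclose t ht hc
    have := h.nonneg (t^2-t0^2)
    gcongr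
  · push Not at hc
    rw [h.zero _ hc]; simp

lemma left_limit {S : Type*} [MetricSpace S] [CompactSpace S] [MeasurableSpace S] [BorelSpace S] (μ : Measure S) [IsFiniteMeasure μ]
    (K : S → ℝ → ℝ) (hK : ContinuousOn (fun y : S × ℝ => K y.1 y.2) {y | 0 < y.2}) (t0 : S → ℝ) (ht0 : Continuous t0)
    {α β γ : ℝ} (hα : 0 < α) (hαβ : α ≤ β) (hγ : 0 < γ) (h1 : ∀ θ, γ < t0 θ ^ 2 - α^2) (h2 : ∀ θ, γ < β^2 - t0 θ ^ 2) (h3 : ∀ θ, 0 ≤ t0 θ)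
    (δ : ℝ) (hδ : 0 < δ) : ∃ ε0 > 0, ∀ χ ε, 0 < ε → ε < ε0 → Nice χ ε → 
      |(∫ θ, (∫ t in α..β, K θ t * χ (t^2 - t0 θ^2) * (2*t)) ∂μ) - ∫ θ, K θ (t0 θ) ∂μ| ≤ δ * μ.real univ := by
  have hKc : ContinuousOn (fun y : S × ℝ => K y.1 y.2) (univ ×ˢ Icc α β) := 
    hK.mono (fun y hy => lt_of_lt_of_le hα hy.2.1)
  have huc := (isCompact_univ.prod isCompact_Icc).uniformContinuousOn_of_continuous hKc
  rw [Metric.uniformContinuousOn_iff] at huc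
  obtain ⟨η, hη, hu⟩ := huc δ hδ
  have hmem : ∀ θ, t0 θ ∈ Icc α β := by
    intro θ
    have a1 := h1 θ; have a2 := h2 θ; have a3 := h3 θ
    constructor <;> nlinarith
  refine ⟨min γ (η * α), by positivity, fun χ ε hε hε0 hn => ?_⟩
  have hεγ : ε < γ := lt_of_lt_of_le hε0 (min_le_left _ _)
  have hεη : ε < η * α := lt_of_lt_of_le hε0 (min_le_right _ _)
  have hχc := hn.smooth.continuous
  have hin : ∀ θ, |(∫ t in α..β, K θ t * χ (t^2 - t0 θ^2) * (2*t)) - K θ (t0 θ)| ≤ δ := by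
    intro θ
    apply inner_close hn hα hαβ (by linarith [h1 θ]) (by linarith [h2 θ])
    · exact hKc.comp (f := fun t : ℝ => (θ, t)) (by fun_prop) (fun t ht => ⟨mem_univ _, ht⟩)
    · intro t ht hlt
      have hm := hmem θ
      have := hu (θ, t) ⟨mem_univ _, ht⟩ (θ, t0 θ) ⟨mem_univ _, hm⟩ (by
        rw [Prod.dist_eq, dist_self, max_eq_right dist_nonneg, Real.dist_eq]
        simp only
        have e : t^2 - t0 θ^2 = (t - t0 θ) * (t + t0 θ) := by ring
        rw [e, abs_mul, abs_of_pos (by linarith [ht.1, hm.1] : 0 < t + t0 θ)] at hlt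
        by_contra hc
        push Not at hc
        nlinarith [ht.1, hm.1])
      rw [Real.dist_eq] at this
      exact this.le
  have c1 : Continuous (fun θ => K θ (t0 θ)) := 
    hK.comp_continuous (f := fun θ => (θ, t0 θ)) (by fun_prop) (fun θ => lt_of_lt_of_le hα (hmem θ).1)
  have c2 : Continuous (fun θ => ∫ t in α..β, K θ t * χ (t^2 - t0 θ^2) * (2*t)) := by
    have hk2 : Continuous (fun y : S × ℝ => K y.1 (max α y.2)) :=
      hK.comp_continuous (f := fun y : S × ℝ => (y.1, max α y.2)) (by fun_prop) (fun y => lt_of_lt_of_le hα (le_max_left _ _))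
    have := intervalIntegral.continuous_parametric_intervalIntegral_of_continuous' (μ := volume)
      (f := fun θ t => K θ (max α t) * χ (t^2 - t0 θ^2) * (2*t)) (by
        simp only [Function.uncurry_def]; exact (hk2.mul (by fun_prop)).mul (by fun_prop)) α β
    convert this using 2 with θ
    apply intervalIntegral.integral_congr
    intro t ht
    rw [uIcc_of_le hαβ] at ht
    simp only [max_eq_right ht.1]
  have hcs : ∀ F : S → ℝ, Continuous F → Integrable F μ := fun F hF => 
    hF.integrable_of_hasCompactSupport (HasCompactSupport.of_compactSpace _)
  rw [← integral_sub (hcs _ c2) (hcs _ c1), ← Real.norm_eq_abs]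
  apply norm_integral_le_of_norm_le_const
  exact Filter.Eventually.of_forall hin

end helperF

section helperG
open Set Filter Topology
lemma riesz_int (p : ℕ) (f : EuclideanSpace ℝ (Fin (2*p+3)) → ℝ) (hf : Continuous f) (hfc : HasCompactSupport f)
    (x : EuclideanSpace ℝ (Fin (2*p+3))) : Integrable (fun y => f y * (1/‖x-y‖)^(2*p+1)) := by
  obtain ⟨M, hM⟩ := hfc.exists_bound_of_continuous hf
  obtain ⟨R, hR⟩ : ∃ R, ∀ u, u ∉ ball (0 : EuclideanSpace ℝ (Fin (2*p+3))) R → f (x - u) = 0 := by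
    obtain ⟨R, hR⟩ := hfc.isBounded.subset_ball x
    refine ⟨R, fun u hu => ?_⟩
    apply image_eq_zero_of_notMem_tsupport
    intro h
    have := hR h
    apply hu
    simpa using this
  have h1 : IntegrableOn (fun u : EuclideanSpace ℝ (Fin (2*p+3)) => (1/‖u‖)^(2*p+1)) (ball 0 R) := by
    rw [integrableOn_fun_norm_addHaar volume (f := fun s => (1/s)^(2*p+1))]
    have : IntegrableOn (fun s : ℝ => s) (Ioo 0 R) := by
      exact (continuous_id.integrableOn_Icc (a := 0) (b := R)).mono_set Ioo_subset_Icc_self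
    refine this.congr_fun ?_ measurableSet_Ioo
    intro s hs
    have : s ≠ 0 := hs.1.ne'
    simp only [finrank_euclideanSpace, Fintype.card_fin, smul_eq_mul]
    rw [show 2*p+3-1 = (2*p+1)+1 by omega, pow_succ, div_pow, one_pow]
    field_simp
  have h2 : Integrable (fun u => f (x - u) * (1/‖u‖)^(2*p+1)) := by
    rw [← integrableOn_iff_integrable_of_support_subset (s := ball 0 R)]
    · refine Integrable.bdd_mul (c := M) h1 ?_ ?_
      · exact (by fun_prop : Continuous fun u => f (x - u)).aestronglyMeasurable
      · exact Eventually.of_forall fun u => hM _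
    · intro u hu
      by_contra hc
      exact hu (by simp only [hR u hc, zero_mul])
  have := h2.comp_sub_left x
  simpa using this

lemma J_bound {χ : ℝ → ℝ} {B : ℝ} {m p : ℕ} (h : ∀ v, |iteratedDeriv m χ v| ≤ B) (a r : ℝ) :
    |∫ s in (-1:ℝ)..1, iteratedDeriv m χ (a - 2*r*s) * (1-s^2)^p| ≤ 2 * B := by
  have := intervalIntegral.norm_integral_le_of_norm_le_const (a := -1) (b := 1) (C := B) (f := fun s : ℝ => iteratedDeriv m χ (a - 2*r*s) * (1-s^2)^p) (by
    intro s hs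
    rw [uIoc_of_le (by norm_num)] at hs
    have hs2 : s^2 ≤ 1 := by nlinarith [hs.1, hs.2]
    rw [norm_mul, Real.norm_eq_abs, Real.norm_eq_abs, ← mul_one B]
    have := h (a - 2*r*s)
    gcongr
    · exact (abs_nonneg _).trans this
    · rw [abs_of_nonneg (by apply pow_nonneg; linarith)]
      apply pow_le_one₀ <;> nlinarith)
  rw [Real.norm_eq_abs, show |(1:ℝ) - (-1)| = 2 by norm_num] at this
  linarith

lemma a_bound {E : Type*} [NormedAddCommGroup E] [InnerProductSpace ℝ E] (x y : E) (hy : ‖y‖ ≤ 1) : 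
    |‖y‖^2 - ‖x‖^2| ≤ (1 + ‖x‖) * ‖y - x‖ := by
  have e : ‖y‖^2 - ‖x‖^2 = (‖y‖ - ‖x‖) * (‖y‖ + ‖x‖) := by ring
  rw [e, abs_mul, abs_of_nonneg (by positivity : 0 ≤ ‖y‖ + ‖x‖), mul_comm]
  gcongr
  exact abs_norm_sub_norm_le y x

lemma right_limit (p : ℕ) (f : EuclideanSpace ℝ (Fin (2*p+3)) → ℝ) (hf : Continuous f) (hfc : HasCompactSupport f)
    (hsupp : ∀ y, f y ≠ 0 → ‖y‖ < 1) (x : EuclideanSpace ℝ (Fin (2*p+3))) (hx : ‖x‖ < 1) 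
    (χ : ℕ → ℝ → ℝ) (ε : ℕ → ℝ) (hε : ∀ j, 0 < ε j) (hε0 : Tendsto ε atTop (𝓝 0)) (C : ℝ) (hC : 0 ≤ C)
    (hn : ∀ j, Nice (χ j) (ε j)) (hb : ∀ j v, |iteratedDeriv (2*p) (χ j) v| ≤ C * (1/ε j)^(2*p+1)) :
    Tendsto (fun j => ∫ y, f y * ∫ s in (-1:ℝ)..1, iteratedDeriv (2*p) (χ j) ((‖y‖^2 - ‖x‖^2) - 2*‖y-x‖*s) * (1-s^2)^p)
      atTop (𝓝 (∫ y, f y * ((-1)^p * (2*p).factorial * (1/(2*‖y-x‖))^(2*p+1)))) := by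
  have hx1 : 0 < 1 - ‖x‖ := by linarith
  have hae : ∀ᵐ y : EuclideanSpace ℝ (Fin (2*p+3)), y ≠ x := by
    rw [ae_iff]; simp
  set B := (2*C) * (1/(1-‖x‖))^(2*p+1) + (2*p).factorial * (1/2)^(2*p+1) with hB
  apply tendsto_integral_of_dominated_convergence (fun y => B * ‖f y * (1/‖x-y‖)^(2*p+1)‖)
  · intro j
    apply Continuous.aestronglyMeasurable
    refine hf.mul ?_
    have hc := iter_cont (hn j).smooth (2*p)
    apply intervalIntegral.continuous_parametric_intervalIntegral_of_continuous'
      (f := fun (y : EuclideanSpace ℝ (Fin (2*p+3))) (s : ℝ) => iteratedDeriv (2*p) (χ j) ((‖y‖^2 - ‖x‖^2) - 2*‖y-x‖*s) * (1-s^2)^p)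
    simp only [Function.uncurry_def]
    fun_prop
  · exact (riesz_int p f hf hfc x).norm.const_mul B
  · intro j
    filter_upwards [hae] with y hyx
    have hr : 0 < ‖y - x‖ := norm_pos_iff.2 (sub_ne_zero.2 hyx)
    by_cases hfy : f y = 0
    · simp [hfy]
    have hy := hsupp y hfy
    rw [norm_mul, norm_mul, mul_left_comm, norm_sub_rev x y]
    gcongr
    rw [Real.norm_eq_abs, Real.norm_eq_abs, abs_of_pos (by positivity : 0 < (1/‖y-x‖)^(2*p+1)), hB, add_mul]
    by_cases hcase : |‖y‖^2 - ‖x‖^2| + ε j < 2 * ‖y-x‖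
    · rw [J_eq (hn j).smooth (hn j).zero (hn j).int hr hcase p]
      rw [abs_mul, abs_mul, abs_pow, abs_neg, abs_one, one_pow, one_mul, abs_of_pos (by positivity : (0:ℝ) < (2*p).factorial), abs_of_pos (by positivity)]
      have : (1 / (2 * ‖y - x‖)) ^ (2 * p + 1) = (1/2)^(2*p+1) * (1/‖y-x‖)^(2*p+1) := by
        rw [← mul_pow]; congr 1; field_simp
      rw [this, ← mul_assoc]
      have : 0 ≤ 2 * C * (1 / (1 - ‖x‖)) ^ (2 * p + 1) * (1 / ‖y - x‖) ^ (2 * p + 1) := by positivity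
      linarith
    · push Not at hcase
      have h1 := a_bound x y hy.le
      have h2 : (1 - ‖x‖) * ‖y-x‖ ≤ ε j := by linarith
      refine (J_bound (hb j) _ _).trans ?_
      have h3 : 1 / ε j ≤ 1 / (1-‖x‖) * (1/‖y-x‖) := by
        rw [div_mul_div_comm, one_mul]
        exact one_div_le_one_div_of_le (by positivity) h2
      have h4 : (1/ε j)^(2*p+1) ≤ (1 / (1-‖x‖))^(2*p+1) * (1/‖y-x‖)^(2*p+1) := by
        rw [← mul_pow]
        have := hε j
        gcongr
      have h5 : 0 ≤ (2*p).factorial * (1/2:ℝ)^(2*p+1) * (1/‖y-x‖)^(2*p+1) := by positivity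
      nlinarith
  · filter_upwards [hae] with y hyx
    have hr : 0 < ‖y - x‖ := norm_pos_iff.2 (sub_ne_zero.2 hyx)
    by_cases hfy : f y = 0
    · simp [hfy]
    have hy := hsupp y hfy
    have h1 := a_bound x y hy.le
    apply tendsto_const_nhds.congr'
    have hpos : 0 < (1 - ‖x‖) * ‖y-x‖ := by positivity
    filter_upwards [hε0.eventually (gt_mem_nhds hpos)] with j hj
    rw [J_eq (hn j).smooth (hn j).zero (hn j).int hr (by linarith) p]

end helperG

section helperH
open Set Filter Topology
lemma middle_theta (p : ℕ) (κ : ℝ) (f : EuclideanSpace ℝ (Fin (2*p+3)) → ℝ) (hf : Continuous f) (hfc : HasCompactSupport f)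
    (θ : EuclideanSpace ℝ (Fin (2*p+3))) (G : ℝ → ℝ)
    (hG : ∀ t, G t = t^(2*p+1) * (κ * ∫ z : sphere (0 : EuclideanSpace ℝ (Fin (2*p+3))) 1, f (θ - t • (z : EuclideanSpace ℝ (Fin (2*p+3)))) ∂(volume : Measure (EuclideanSpace ℝ (Fin (2*p+3)))).toSphere))
    (hGd : ∀ k, ∀ t > 0, DifferentiableAt ℝ (Dop^[k] G) t)
    {χ : ℝ → ℝ} {ε : ℝ} (h : Nice χ ε) {α β c : ℝ} (hα : 0 < α) (hαβ : α ≤ β) (h1 : ε < c - α^2) (h2 : ε < β^2 - c) :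
    ∫ t in α..β, Dop^[2*p] G t * χ (t^2 - c) * (2*t) = 2 * κ * ∫ y, f y * iteratedDeriv (2*p) χ (‖θ - y‖^2 - c) := by
  rw [ibp_D h.smooth h.zero hα hαβ h1 h2 (2*p) G hGd, pow_mul, neg_one_sq, one_pow, one_mul]
  have hc := iter_cont h.smooth (2*p)
  have hint : Integrable (fun u => f (θ - u) * iteratedDeriv (2*p) χ (‖u‖^2 - c)) := by
    have hcs : HasCompactSupport (fun u => f (θ - u)) := hfc.comp_homeomorph (Homeomorph.subLeft θ)
    exact Continuous.integrable_of_hasCompactSupport (by fun_prop) hcs.mul_right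
  have e1 : ∫ y, f y * iteratedDeriv (2*p) χ (‖θ - y‖^2 - c) = ∫ u, f (θ - u) * iteratedDeriv (2*p) χ (‖u‖^2 - c) := by
    rw [← integral_sub_left_eq_self (fun y => f y * iteratedDeriv (2*p) χ (‖θ - y‖^2 - c)) volume θ]
    simp
  rw [e1, polar_swap _ hint, ← integral_const_mul, intervalIntegral.integral_of_le hαβ]
  have hsub : Ioc α β ⊆ Ioi 0 := fun t ht => lt_trans hα ht.1
  rw [← setIntegral_eq_of_subset_of_forall_diff_eq_zero measurableSet_Ioi hsub (f := fun t => G t * iteratedDeriv (2*p) χ (t^2 - c) * (2*t))]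
  · apply setIntegral_congr_fun measurableSet_Ioi
    intro t ht
    have ht0 : 0 < t := ht
    have hnorm : ∀ z : sphere (0 : EuclideanSpace ℝ (Fin (2*p+3))) 1, ‖t • (z : EuclideanSpace ℝ (Fin (2*p+3)))‖ = t := by
      intro z
      rw [norm_smul]; simp [abs_of_pos ht0]
    simp only [hnorm, hG, integral_mul_const]
    rw [show 2*p+3-1 = (2*p+1)+1 by omega, pow_succ]
    ring
  · intro t ht
    have ht0 : 0 < t := ht.1
    rw [iter_zero h.zero (2*p), mul_zero, zero_mul]
    have : t ≤ α ∨ β < t := by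
      by_contra hcon
      push Not at hcon
      exact ht.2 ⟨hcon.1, hcon.2⟩
    rw [lt_abs]
    rcases this with h' | h'
    · right; nlinarith
    · left; nlinarith

lemma middle (p : ℕ) (f : EuclideanSpace ℝ (Fin (2*p+3)) → ℝ) (hf : Continuous f) (hfc : HasCompactSupport f)
    (x : EuclideanSpace ℝ (Fin (2*p+3))) (h : ℝ → ℝ) (hc : Continuous h) :
    ∫ θ : sphere (0 : EuclideanSpace ℝ (Fin (2*p+3))) 1, (∫ y, f y * h (‖(θ : EuclideanSpace ℝ (Fin (2*p+3))) - y‖^2 - ‖x - (θ : EuclideanSpace ℝ (Fin (2*p+3)))‖^2)) ∂(volume : Measure (EuclideanSpace ℝ (Fin (2*p+3)))).toSphere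
    = (2 * Real.pi ^ (p+1) / p.factorial) * ∫ y, f y * ∫ s in (-1:ℝ)..1, h ((‖y‖^2 - ‖x‖^2) - 2*‖y-x‖*s) * (1-s^2)^p := by
  rw [integral_integral_swap_of_hasCompactSupport (f := fun (θ : sphere (0 : EuclideanSpace ℝ (Fin (2*p+3))) 1) y => f y * h (‖(θ : EuclideanSpace ℝ (Fin (2*p+3))) - y‖^2 - ‖x - (θ : EuclideanSpace ℝ (Fin (2*p+3)))‖^2))]
  · rw [← integral_const_mul]
    congr 1
    ext y
    rw [integral_const_mul, mul_left_comm]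
    congr 1
    have := slice p (y - x) (fun v => h ((‖y‖^2 - ‖x‖^2) - 2 * v)) (by fun_prop)
    simp_rw [← mul_assoc] at this
    rw [← this]
    congr 1
    ext z
    congr 1
    have hz : ‖(z : EuclideanSpace ℝ (Fin (2*p+3)))‖ = 1 := by simp
    rw [norm_sub_sq_real, norm_sub_sq_real, inner_sub_right, real_inner_comm x]
    ring
  · simp only [Function.uncurry_def]; fun_prop
  · apply HasCompactSupport.intro (isCompact_univ.prod hfc.isCompact)
    rintro ⟨θ, y⟩ hy
    have : y ∉ tsupport f := fun hh => hy ⟨mem_univ _, hh⟩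
    simp [Function.uncurry, image_eq_zero_of_notMem_tsupport this]

lemma const_id (p : ℕ) : 
    let κ := (1 / (2 * Real.pi ^ (((2*p+3 : ℕ) : ℝ) / 2) / Real.Gamma (((2*p+3 : ℕ) : ℝ) / 2)))
    κ * (2 * κ * (2 * Real.pi ^ (p+1) / p.factorial) * ((-1)^p * (2*p).factorial * (1/2)^(2*p+1))) =
    (2 * (-1 : ℝ) ^ p * Real.Gamma (((2*p+3:ℕ) : ℝ) / 2) ^ 2 / Real.pi) *
        (Real.Gamma (((2*p+3:ℕ) : ℝ) / 2 - 1) / (4 * Real.pi ^ (((2*p+3:ℕ) : ℝ) / 2))) := by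
  intro κ
  have hpi := Real.pi_pos
  have hs : √Real.pi * √Real.pi = Real.pi := Real.mul_self_sqrt hpi.le
  have hs0 : 0 < √Real.pi := Real.sqrt_pos.2 hpi
  have e1 : Real.pi ^ (((2*p+3 : ℕ) : ℝ) / 2) = Real.pi ^ (p+1) * √Real.pi := by
    rw [show (((2*p+3 : ℕ) : ℝ) / 2) = ((p+1:ℕ):ℝ) + 1/2 by push_cast; ring, Real.rpow_add hpi, Real.rpow_natCast, Real.sqrt_eq_rpow]
  have e2 : Real.Gamma (((2*p+3:ℕ) : ℝ) / 2 - 1) * p.factorial = (2*p).factorial * (1/2)^(2*p) * √Real.pi := by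
    have h := Real.Gamma_mul_Gamma_add_half (p + 1/2)
    rw [show (p:ℝ) + 1/2 + 1/2 = p + 1 by ring, Real.Gamma_nat_eq_factorial, show 2 * ((p:ℝ)+1/2) = ((2*p:ℕ):ℝ) + 1 by push_cast; ring, Real.Gamma_nat_eq_factorial] at h
    rw [show ((2*p+3:ℕ) : ℝ) / 2 - 1 = p + 1/2 by push_cast; ring, h]
    congr 2
    rw [show (1:ℝ) - (((2*p:ℕ):ℝ) + 1) = -((2*p:ℕ):ℝ) by ring, Real.rpow_neg two_pos.le, Real.rpow_natCast]
    simp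
  have hG : 0 < Real.Gamma (((2*p+3:ℕ) : ℝ) / 2) := Real.Gamma_pos_of_pos (by positivity)
  have hfac : (0:ℝ) < p.factorial := by positivity
  have e3 : Real.Gamma (((2*p+3:ℕ) : ℝ) / 2 - 1) = (2*p).factorial * (1/2)^(2*p) * √Real.pi / p.factorial := by
    rw [eq_div_iff hfac.ne', e2]
  simp only [κ]
  rw [e3, e1]
  set Γ := Real.Gamma (((2*p+3:ℕ) : ℝ) / 2)
  set P := Real.pi ^ (p+1) with hP
  have hP0 : 0 < P := by positivity
  rw [pow_succ]
  set H := (1/2:ℝ)^(2*p)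
  set S := √Real.pi
  rw [← hs]
  field_simp
  try ring

lemma main_aux (p : ℕ) (κ : ℝ) (f : EuclideanSpace ℝ (Fin (2*p+3)) → ℝ) (hf : ContDiff ℝ (⊤ : ℕ∞) f) (hfc : HasCompactSupport f)
    (hsupp : ∀ y, f y ≠ 0 → ‖y‖ < 1) (x : EuclideanSpace ℝ (Fin (2*p+3))) (hx : ‖x‖ < 1)
    (G : EuclideanSpace ℝ (Fin (2*p+3)) → ℝ → ℝ)
    (hG : ∀ θ t, G θ t = t^(2*p+1) * (κ * ∫ z : sphere (0 : EuclideanSpace ℝ (Fin (2*p+3))) 1, f (θ - t • (z : EuclideanSpace ℝ (Fin (2*p+3)))) ∂(volume : Measure (EuclideanSpace ℝ (Fin (2*p+3)))).toSphere)) :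
    ∫ θ : sphere (0 : EuclideanSpace ℝ (Fin (2*p+3))) 1, Dop^[2*p] (G θ) ‖x - (θ : EuclideanSpace ℝ (Fin (2*p+3)))‖ ∂(volume : Measure (EuclideanSpace ℝ (Fin (2*p+3)))).toSphere
     = 2 * κ * (2 * Real.pi ^ (p+1) / p.factorial) * ∫ y, f y * ((-1)^p * (2*p).factorial * (1/(2*‖y-x‖))^(2*p+1)) := by
  set μ := (volume : Measure (EuclideanSpace ℝ (Fin (2*p+3)))).toSphere with hμ
  let A0 : EuclideanSpace ℝ (Fin (2*p+3)) × ℝ × EuclideanSpace ℝ (Fin (2*p+3)) → ℝ := fun w => w.2.1^(2*p+1) * (κ * f (w.1 - w.2.1 • w.2.2))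
  have hA0 : ContDiffOn ℝ (⊤:ℕ∞) A0 (Upos (EuclideanSpace ℝ (Fin (2*p+3)))) := by
    apply ContDiff.contDiffOn
    have : ContDiff ℝ (⊤:ℕ∞) (fun w : EuclideanSpace ℝ (Fin (2*p+3)) × ℝ × EuclideanSpace ℝ (Fin (2*p+3)) => f (w.1 - w.2.1 • w.2.2)) := by
      apply hf.comp; fun_prop
    fun_prop
  have hGA : ∀ θ, ∀ t > 0, G θ t = ∫ z, A0 (θ, t, (z : EuclideanSpace ℝ (Fin (2*p+3)))) ∂μ := by
    intro θ t _
    simp only [A0]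
    rw [hG, integral_const_mul, integral_const_mul]
  have hcontK : ContinuousOn (fun y : sphere (0 : EuclideanSpace ℝ (Fin (2*p+3))) 1 × ℝ => Dop^[2*p] (G y.1) y.2) {y | 0 < y.2} := by
    have := iter_cont_joint μ G hA0 hGA (2*p)
    exact this.comp (f := fun y : sphere (0 : EuclideanSpace ℝ (Fin (2*p+3))) 1 × ℝ => ((y.1 : EuclideanSpace ℝ (Fin (2*p+3))), y.2)) (by fun_prop) (fun y hy => hy)
  set α := (1 - ‖x‖)/2 with hα
  have hα0 : 0 < α := by linarith
  have hα1 : α ≤ 1/2 := by have := norm_nonneg x; linarith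
  have ht0 : ∀ θ : sphere (0 : EuclideanSpace ℝ (Fin (2*p+3))) 1, 2 * α ≤ ‖x - (θ : EuclideanSpace ℝ (Fin (2*p+3)))‖ ∧ ‖x - (θ : EuclideanSpace ℝ (Fin (2*p+3)))‖ ≤ 2 := by
    intro θ
    have hz : ‖(θ : EuclideanSpace ℝ (Fin (2*p+3)))‖ = 1 := by simp
    have h1 := norm_sub_norm_le (θ : EuclideanSpace ℝ (Fin (2*p+3))) x
    have h2 := norm_sub_le x (θ : EuclideanSpace ℝ (Fin (2*p+3)))
    rw [norm_sub_rev] at h1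
    constructor <;> linarith
  have hb1 : ∀ θ : sphere (0 : EuclideanSpace ℝ (Fin (2*p+3))) 1, α^2 < ‖x - (θ : EuclideanSpace ℝ (Fin (2*p+3)))‖^2 - α^2 := by
    intro θ; have := (ht0 θ).1; nlinarith
  have hb2 : ∀ θ : sphere (0 : EuclideanSpace ℝ (Fin (2*p+3))) 1, α^2 < 3^2 - ‖x - (θ : EuclideanSpace ℝ (Fin (2*p+3)))‖^2 := by
    intro θ; have := (ht0 θ).1; have := (ht0 θ).2; nlinarith
  obtain ⟨χ, C, hC, hχ⟩ := exists_nice (2*p)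
  let ε : ℕ → ℝ := fun j => 1 / ((j:ℝ) + 1)
  have hε : ∀ j, 0 < ε j := fun j => by positivity
  have hε0 : Tendsto ε atTop (𝓝 0) := tendsto_one_div_add_atTop_nhds_zero_nat
  have hR := right_limit p f hf.continuous hfc hsupp x hx (fun j => χ (ε j)) ε hε hε0 C hC (fun j => (hχ _ (hε j)).1) (fun j => (hχ _ (hε j)).2)
  have hR' := hR.const_mul (2 * κ * (2 * Real.pi ^ (p+1) / p.factorial))
  refine tendsto_nhds_unique (f := fun j => ∫ θ, (∫ t in α..3, Dop^[2*p] (G θ) t * χ (ε j) (t^2 - ‖x - (θ : EuclideanSpace ℝ (Fin (2*p+3)))‖^2) * (2*t)) ∂μ) (l := atTop) ?_ ?_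
  · rw [Metric.tendsto_nhds]
    intro δ hδ
    have hm : 0 < μ.real univ + 1 := by positivity
    obtain ⟨ε0, hε00, hL⟩ := left_limit μ (fun θ t => Dop^[2*p] (G θ) t) hcontK (fun θ => ‖x - (θ : EuclideanSpace ℝ (Fin (2*p+3)))‖) (by fun_prop)
      hα0 (by linarith : α ≤ 3) (by positivity : 0 < α^2) hb1 hb2 (fun θ => norm_nonneg _) (δ / (μ.real univ + 1)) (by positivity)
    filter_upwards [hε0.eventually (gt_mem_nhds hε00)] with j hj
    have := hL (χ (ε j)) (ε j) (hε j) hj (hχ _ (hε j)).1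
    rw [Real.dist_eq]
    refine lt_of_le_of_lt this ?_
    rw [div_mul_eq_mul_div, div_lt_iff₀ hm]
    nlinarith
  · refine hR'.congr' ?_
    filter_upwards [hε0.eventually (gt_mem_nhds (by positivity : 0 < α^2))] with j hj
    have hnice := (hχ _ (hε j)).1
    have hmid := middle p f hf.continuous hfc x (iteratedDeriv (2*p) (χ (ε j))) (iter_cont hnice.smooth _)
    rw [mul_assoc, ← hmid, ← integral_const_mul]
    congr 1
    ext θ
    rw [middle_theta p κ f hf.continuous hfc θ (G θ) (hG θ) (fun k t ht => iter_diff μ G hA0 hGA k θ t ht) hnice hα0 (by linarith) (by linarith [hb1 θ]) (by linarith [hb2 θ])]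

end helperH

/-- the normalized back-projection of `D^{n-3} t^{n-2} (Mf)(θ,t)` equals
`c` times the Riesz potential `I²f`, for `n ≥ 3` odd. -/
theorem backprojection_eq_riesz_potential
    (n : ℕ) (hn3 : 3 ≤ n) (hodd : Odd n)
    (f : EuclideanSpace ℝ (Fin n) → ℝ)
    (hf : ContDiff ℝ (⊤ : ℕ∞) f) (hfc : HasCompactSupport f)
    (hsupp : tsupport f ⊆ ball (0 : EuclideanSpace ℝ (Fin n)) 1)
    -- spherical means `φ_θ(t) = (Mf)(θ,t)`
    (φ : EuclideanSpace ℝ (Fin n) → ℝ → ℝ)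
    (hφ : ∀ θ : EuclideanSpace ℝ (Fin n), ∀ t : ℝ,
      φ θ t = (1 / (2 * Real.pi ^ ((n : ℝ) / 2) / Real.Gamma ((n : ℝ) / 2))) *
        ∫ σ : sphere (0 : EuclideanSpace ℝ (Fin n)) 1,
          f (θ - t • (σ : EuclideanSpace ℝ (Fin n))) ∂(sphereMeasure n))
    -- `g_θ(t) = D^{n-3}[t ↦ t^{n-2} φ_θ(t)](t)`
    (g : EuclideanSpace ℝ (Fin n) → ℝ → ℝ)
    (hg : ∀ θ : EuclideanSpace ℝ (Fin n), ∀ t : ℝ,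
      g θ t = Dop^[n - 3] (fun s => s ^ (n - 2) * φ θ s) t)
    (x : EuclideanSpace ℝ (Fin n)) (hx : x ∈ ball (0 : EuclideanSpace ℝ (Fin n)) 1) :
    (1 / (2 * Real.pi ^ ((n : ℝ) / 2) / Real.Gamma ((n : ℝ) / 2))) *
      ∫ θ : sphere (0 : EuclideanSpace ℝ (Fin n)) 1,
        g (θ : EuclideanSpace ℝ (Fin n)) ‖x - (θ : EuclideanSpace ℝ (Fin n))‖
      ∂(sphereMeasure n)
    = (2 * (-1 : ℝ) ^ ((n - 3) / 2) * Real.Gamma ((n : ℝ) / 2) ^ 2 / Real.pi) *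
        ((Real.Gamma ((n : ℝ) / 2 - 1) / (4 * Real.pi ^ ((n : ℝ) / 2))) *
          ∫ y in ball (0 : EuclideanSpace ℝ (Fin n)) 1,
            f y * ‖x - y‖ ^ ((2 : ℝ) - n)) := by
  obtain ⟨q, hq⟩ := hodd
  obtain ⟨p, rfl⟩ : ∃ p, n = 2*p+3 := ⟨q-1, by omega⟩
  have hs : ∀ y, f y ≠ 0 → ‖y‖ < 1 := by
    intro y hy
    simpa using hsupp (subset_tsupport f hy)
  have hx1 : ‖x‖ < 1 := by simpa using hx
  have hc := const_id p
  rw [show (2*p+3-3)/2 = p by omega]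
  set κ := (1 / (2 * Real.pi ^ (((2*p+3 : ℕ) : ℝ) / 2) / Real.Gamma (((2*p+3 : ℕ) : ℝ) / 2))) with hκ
  have hm := main_aux p κ f hf hfc hs x hx1 (fun θ s => s ^ (2*p+1) * φ θ s)
    (fun θ t => by
      show t ^ (2*p+1) * φ θ t = _
      rw [hφ]; rfl)
  have hL : (∫ θ : sphere (0 : EuclideanSpace ℝ (Fin (2*p+3))) 1,
        g (θ : EuclideanSpace ℝ (Fin (2*p+3))) ‖x - (θ : EuclideanSpace ℝ (Fin (2*p+3)))‖
      ∂(sphereMeasure (2*p+3))) = 2 * κ * (2 * Real.pi ^ (p+1) / p.factorial) * ∫ y, f y * ((-1)^p * (2*p).factorial * (1/(2*‖y-x‖))^(2*p+1)) := by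
    rw [← hm]
    unfold sphereMeasure
    congr 1
    funext θ
    rw [hg]
    rfl
  have hR : (∫ y in ball (0 : EuclideanSpace ℝ (Fin (2*p+3))) 1,
            f y * ‖x - y‖ ^ ((2 : ℝ) - ((2*p+3 : ℕ) : ℝ))) = ∫ y, f y * (1/‖y-x‖)^(2*p+1) := by
    rw [setIntegral_eq_integral_of_forall_compl_eq_zero]
    · congr 1
      funext y
      rw [show (2 : ℝ) - ((2*p+3 : ℕ) : ℝ) = -((2*p+1 : ℕ) : ℝ) by push_cast; ring,
        Real.rpow_neg (norm_nonneg _), Real.rpow_natCast, norm_sub_rev, one_div, inv_pow]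
    · intro y hy
      have : f y = 0 := by
        by_contra h
        exact hy (by simpa using hs y h)
      rw [this, zero_mul]
  have hI : (∫ y, f y * ((-1)^p * (2*p).factorial * (1/(2*‖y-x‖))^(2*p+1)))
      = ((-1)^p * (2*p).factorial * (1/2)^(2*p+1)) * ∫ y, f y * (1/‖y-x‖)^(2*p+1) := by
    rw [← integral_const_mul]
    congr 1
    funext y
    rw [show 1/(2*‖y-x‖) = (1/2) * (1/‖y-x‖) by rw [one_div_mul_one_div], mul_pow]
    ring
  rw [hL, hR, hI, ← mul_assoc (2 * (-1 : ℝ) ^ p * _ / _), ← hc]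
  ring
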